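/- Let H be a Hopf algebra over an algebraically closed field F, and let B be a domain over F satisfying a polynomial identity which admits an inner faithful H-action. Then the H-action extends to an inner faithful action of H on the quotient division algebra Q_B of B. -/

import Mathlib

open TensorProduct

/-- An action of a (bi/Hopf) algebra `H` on an algebra `A`, where the comultiplication and
counit of `H` are supplied explicitly as `comul` and `counit`.  This says exactly that `A`
is an `H`-module algebra:  `h ⬝ (ab) = ∑ (h₁ ⬝ a)(h₂ ⬝ b)` and `h ⬝ 1 = ε(h) 1`. -/
structure ModAlgAction (k : Type) [CommRing k] (H : Type) [Ring H] [Module k H]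
    (comul : H →ₗ[k] H ⊗[k] H) (counit : H →ₗ[k] k)
    (A : Type) [Ring A] [Algebra k A] where
  /-- the action map -/
  act : H →ₗ[k] A →ₗ[k] A
  one_act : ∀ a : A, act 1 a = a
  mul_act : ∀ (g h : H) (a : A), act (g * h) a = act g (act h a)
  act_one : ∀ h : H, act h 1 = algebraMap k A (counit h)
  act_mul : ∀ (h : H) (a b : A), act h (a * b) =
    TensorProduct.lift (((LinearMap.mul k A).comp (act.flip a)).compl₂ (act.flip b)) (comul h)

/-- An action of a Hopf algebra `H` on an algebra `A`, i.e. an `H`-module algebra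
structure on `A`. -/
abbrev HopfAction (k : Type) [CommRing k] (H : Type) [Ring H] [Bialgebra k H]
    (A : Type) [Ring A] [Algebra k A] :=
  ModAlgAction k H (Coalgebra.comul (R := k)) (Coalgebra.counit (R := k)) A

/-- The `k`-subspace `I ⊗ H + H ⊗ I` of `H ⊗ H` determined by a subspace `I ⊆ H`. -/
noncomputable def tensorIdeal (k : Type) [CommRing k] (H : Type) [Ring H] [Module k H]
    (I : Submodule k H) : Submodule k (H ⊗[k] H) :=
  Submodule.span k {z : H ⊗[k] H |
    (∃ a ∈ I, ∃ b : H, z = a ⊗ₜ[k] b) ∨ (∃ a : H, ∃ b ∈ I, z = a ⊗ₜ[k] b)}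

/-- A (two-sided) Hopf ideal of `H`, with respect to explicitly supplied comultiplication,
counit and antipode. -/
def IsHopfIdealWith (k : Type) [CommRing k] (H : Type) [Ring H] [Module k H]
    (comul : H →ₗ[k] H ⊗[k] H) (counit : H →ₗ[k] k) (antipode : H →ₗ[k] H)
    (I : Submodule k H) : Prop :=
  (∀ x ∈ I, ∀ h : H, h * x ∈ I ∧ x * h ∈ I) ∧
  (∀ x ∈ I, comul x ∈ tensorIdeal k H I) ∧
  (∀ x ∈ I, counit x = 0) ∧
  (∀ x ∈ I, antipode x ∈ I)

/-- A Hopf ideal of a Hopf algebra `H`. -/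
abbrev IsHopfIdeal (k : Type) [CommRing k] (H : Type) [Ring H] [HopfAlgebra k H]
    (I : Submodule k H) : Prop :=
  IsHopfIdealWith k H (Coalgebra.comul (R := k)) (Coalgebra.counit (R := k))
    (HopfAlgebra.antipode (R := k)) I

/-- Inner faithfulness of an action map `act`: no nonzero Hopf ideal annihilates `A`. -/
def InnerFaithfulWith (k : Type) [CommRing k] (H : Type) [Ring H] [Module k H]
    (comul : H →ₗ[k] H ⊗[k] H) (counit : H →ₗ[k] k) (antipode : H →ₗ[k] H)
    (A : Type) [Ring A] [Algebra k A] (act : H →ₗ[k] A →ₗ[k] A) : Prop :=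
  ∀ I : Submodule k H, IsHopfIdealWith k H comul counit antipode I →
    (∀ x ∈ I, ∀ a : A, act x a = 0) → I = ⊥

/-- Inner faithfulness of a Hopf algebra action: no nonzero Hopf ideal of `H` acts by zero. -/
abbrev HopfAction.InnerFaithful {k : Type} [CommRing k] {H : Type} [Ring H] [HopfAlgebra k H]
    {A : Type} [Ring A] [Algebra k A] (ha : HopfAction k H A) : Prop :=
  InnerFaithfulWith k H (Coalgebra.comul (R := k)) (Coalgebra.counit (R := k))
    (HopfAlgebra.antipode (R := k)) A ha.act

/-- The set of invariants of an action. -/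
def ModAlgAction.invariants {k : Type} [CommRing k] {H : Type} [Ring H] [Module k H]
    {comul : H →ₗ[k] H ⊗[k] H} {counit : H →ₗ[k] k}
    {A : Type} [Ring A] [Algebra k A] (ha : ModAlgAction k H comul counit A) : Set A :=
  {a : A | ∀ h : H, ha.act h a = counit h • a}

/-- The kernel of an action, as a subspace of `H`. -/
noncomputable def ModAlgAction.actionKernel {k : Type} [CommRing k] {H : Type} [Ring H]
    [Module k H] {comul : H →ₗ[k] H ⊗[k] H} {counit : H →ₗ[k] k}
    {A : Type} [Ring A] [Algebra k A] (ha : ModAlgAction k H comul counit A) :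
    Submodule k H :=
  ⨅ a : A, LinearMap.ker (ha.act.flip a)

/-- `B` satisfies a polynomial identity over `F`: some nonzero noncommutative polynomial
in finitely many variables vanishes identically on `B`. -/
def IsPIAlgebra (F : Type) [CommRing F] (B : Type) [Ring B] [Algebra F B] : Prop :=
  ∃ (m : ℕ) (f : FreeAlgebra F (Fin m)), f ≠ 0 ∧
    ∀ v : Fin m → B, FreeAlgebra.lift F v f = 0

/-!
An action of `H` on `B` amounts to the orbit homomorphism `z ↦ (h ↦ h • z)` from `B` to the
convolution algebra `Hom(H, B)`, so it is enough to extend `B → Hom(H, B) → Hom(H, Q)` to an algebra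
homomorphism on `Q`. Such an extension exists once every `z ≠ 0` is sent to a unit, and since
homomorphisms out of `Q` are determined by their restriction to `B`, the module axioms carry over.

Every element of `H` lies in a finite-dimensional left coideal. A basis `w` of it has
`Δ wᵢ = ∑ⱼ aᵢⱼ ⊗ wⱼ` for a multiplicative matrix `a`, which the antipode inverts. Convolution by the
orbit map of `z` acts there through the matrix `(aᵢⱼ • z)`, and
`∑ⱼ (aᵢⱼ • z) (∑ₗ aⱼₗ • vₗ) = ∑ₗ aᵢₗ • (z vₗ)` shows that this matrix is conjugate, through `a`, to
multiplication by `z`. It is therefore injective on columns over `B`, hence over `Q` by clearing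
denominators, hence invertible over `Q`.
-/

open Coalgebra HopfAlgebra WithConv
open scoped Matrix

/-! ### Embeddings into division rings of right fractions -/

lemma isUnit_of_mulVec_injective {R n : Type*} [Ring R] [IsArtinianRing Rᵐᵒᵖ] [Fintype n]
    [DecidableEq n] {M : Matrix n n R} (hM : Function.Injective M.mulVec) : IsUnit M :=
  have : IsArtinianRing (Matrix n n R)ᵐᵒᵖ := RingEquiv.mopMatrix.isArtinianRing
  IsArtinianRing.isUnit_iff_isLeftRegular.2 (Matrix.isLeftRegular_iff_mulVec_injective.2 hM)

/-- `ι` embeds `B` into the division ring `Q`, and every element of `Q` is a right fraction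
`a b⁻¹` of elements of `B`: the defining property of the quotient division algebra of `B`. -/
structure IsRightFractionEmbedding {F B Q : Type*} [CommSemiring F] [Ring B] [Algebra F B]
    [DivisionRing Q] [Algebra F Q] (ι : B →ₐ[F] Q) : Prop where
  injective : Function.Injective ι
  exists_eq_mul_inv (q : Q) : ∃ a b : B, b ≠ 0 ∧ q = ι a * (ι b)⁻¹

namespace IsRightFractionEmbedding

variable {F B Q R : Type*} [CommSemiring F] [Ring B] [Algebra F B] [DivisionRing Q] [Algebra F Q]
  [Ring R] [Algebra F R] {ι : B →ₐ[F] Q}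

lemma map_ne_zero (hι : IsRightFractionEmbedding ι) {b : B} (hb : b ≠ 0) : ι b ≠ 0 :=
  (map_ne_zero_iff ι hι.injective).2 hb

lemma noZeroDivisors (hι : IsRightFractionEmbedding ι) : NoZeroDivisors B :=
  hι.injective.noZeroDivisors ι (map_zero ι) (map_mul ι)

lemma exists_mul_eq (hι : IsRightFractionEmbedding ι) (q : Q) :
    ∃ a b : B, b ≠ 0 ∧ q * ι b = ι a := by
  obtain ⟨a, b, hb, rfl⟩ := hι.exists_eq_mul_inv q
  exact ⟨a, b, hb, inv_mul_cancel_right₀ (hι.map_ne_zero hb) _⟩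

lemma exists_common_denominator (hι : IsRightFractionEmbedding ι) {n : Type*} [Finite n]
    (x : n → Q) : ∃ b : B, b ≠ 0 ∧ ∃ y : n → B, ∀ i, x i * ι b = ι (y i) := by
  classical
  have := Fintype.ofFinite n
  have := hι.noZeroDivisors
  suffices h : ∀ s : Finset n, ∃ b : B, b ≠ 0 ∧ ∀ i ∈ s, ∃ y, x i * ι b = ι y by
    obtain ⟨b, hb, hy⟩ := h Finset.univ
    choose y hy using fun i => hy i (Finset.mem_univ i)
    exact ⟨b, hb, y, hy⟩
  intro s
  induction s using Finset.induction_on with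
  | empty =>
    have := ι.toRingHom.domain_nontrivial
    exact ⟨1, one_ne_zero, by simp⟩
  | insert i s _ ih =>
    obtain ⟨b, hb, hs⟩ := ih
    obtain ⟨c, d, hd, hcd⟩ := hι.exists_mul_eq (x i * ι b)
    refine ⟨b * d, mul_ne_zero hb hd, fun j hj => ?_⟩
    rcases Finset.mem_insert.1 hj with rfl | hj
    · exact ⟨c, by rw [map_mul, ← mul_assoc, hcd]⟩
    · obtain ⟨y, hy⟩ := hs j hj
      exact ⟨y * d, by rw [map_mul, ← mul_assoc, hy, map_mul]⟩

lemma mulVec_injective_map (hι : IsRightFractionEmbedding ι) {m n : Type*} [Fintype n]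
    {M : Matrix m n B} (hM : Function.Injective M.mulVec) :
    Function.Injective (M.map ι).mulVec := by
  intro x x' hxx'
  obtain ⟨b, hb, y, hy⟩ := hι.exists_common_denominator (x - x')
  have hMy : M *ᵥ y = 0 := by
    ext i
    refine hι.injective ?_
    calc ι ((M *ᵥ y) i) = (M.map ι *ᵥ (x - x')) i * ι b := by
          simp only [Matrix.mulVec, dotProduct, map_sum, map_mul, ← hy, Matrix.map_apply,
            Finset.sum_mul, mul_assoc]
      _ = ι 0 := by rw [Matrix.mulVec_sub, sub_eq_zero.2 hxx', Pi.zero_apply, zero_mul, map_zero]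
  have hy0 : y = 0 := hM (hMy.trans (Matrix.mulVec_zero M).symm)
  ext i
  refine sub_eq_zero.1 ((mul_eq_zero.1 ((hy i).trans ?_)).resolve_right (hι.map_ne_zero hb))
  rw [hy0, Pi.zero_apply, map_zero]

lemma algHom_ext (hι : IsRightFractionEmbedding ι) {φ ψ : Q →ₐ[F] R}
    (h : φ.comp ι = ψ.comp ι) : φ = ψ := by
  ext q
  obtain ⟨a, b, hb, hab⟩ := hι.exists_mul_eq q
  have hunit : IsUnit (φ (ι b)) := (IsUnit.mk0 _ (hι.map_ne_zero hb)).map φ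
  refine hunit.mul_right_cancel ?_
  calc φ q * φ (ι b) = φ (ι a) := by rw [← map_mul, hab]
    _ = ψ (ι a) := DFunLike.congr_fun h a
    _ = ψ q * ψ (ι b) := by rw [← map_mul, hab]
    _ = ψ q * φ (ι b) := by rw [show φ (ι b) = ψ (ι b) from DFunLike.congr_fun h b]

lemma exists_value_of_isUnit (hι : IsRightFractionEmbedding ι) {ρ : B →ₐ[F] R}
    (hρ : ∀ b, b ≠ 0 → IsUnit (ρ b)) (q : Q) :
    ∃ r : R, ∀ a b : B, q * ι b = ι a → r * ρ b = ρ a := by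
  obtain ⟨a, b, hb, hab⟩ := hι.exists_mul_eq q
  obtain ⟨r, hr⟩ : ∃ r, r * ρ b = ρ a :=
    ⟨ρ a * ↑(hρ b hb).unit⁻¹, by rw [mul_assoc, IsUnit.val_inv_mul, mul_one]⟩
  -- Any two fractions representing `q` agree after expansion to a common denominator.
  refine ⟨r, fun a' b' hab' => ?_⟩
  obtain ⟨c, d, hd, hcd⟩ := hι.exists_mul_eq ((ι b)⁻¹ * ι b')
  have hb'd : b' * d = b * c := hι.injective <| by
    rw [map_mul, map_mul, ← hcd, mul_assoc, mul_inv_cancel_left₀ (hι.map_ne_zero hb)]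
  have ha'd : a' * d = a * c := hι.injective <| by
    rw [map_mul, map_mul, ← hab', ← hab, mul_assoc, mul_assoc, ← map_mul, ← map_mul, hb'd]
  refine (hρ d hd).mul_right_cancel ?_
  rw [mul_assoc, ← map_mul, hb'd, map_mul, ← mul_assoc, hr, ← map_mul, ← ha'd, map_mul]

lemma exists_algHom_comp_eq (hι : IsRightFractionEmbedding ι) {ρ : B →ₐ[F] R}
    (hρ : ∀ b, b ≠ 0 → IsUnit (ρ b)) : ∃ φ : Q →ₐ[F] R, φ.comp ι = ρ := by
  have := hι.noZeroDivisors
  choose φ hφ using hι.exists_value_of_isUnit hρ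
  have hφι (b : B) : φ (ι b) = ρ b := by simpa using hφ (ι b) b 1 (by simp)
  have hadd (q q' : Q) : φ (q + q') = φ q + φ q' := by
    obtain ⟨b, hb, y, hy⟩ := hι.exists_common_denominator ![q, q']
    have hq : q * ι b = ι (y 0) := hy 0
    have hq' : q' * ι b = ι (y 1) := hy 1
    refine (hρ b hb).mul_right_cancel ?_
    rw [add_mul, hφ q _ b hq, hφ q' _ b hq', ← map_add,
      hφ _ (y 0 + y 1) b (by rw [add_mul, hq, hq', map_add])]
  have hmul (q q' : Q) : φ (q * q') = φ q * φ q' := by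
    obtain ⟨a, b, hb, hab⟩ := hι.exists_mul_eq q'
    obtain ⟨c, d, hd, hcd⟩ := hι.exists_mul_eq (q * ι a)
    refine (hρ _ (mul_ne_zero hb hd)).mul_right_cancel ?_
    calc φ (q * q') * ρ (b * d) = ρ c :=
          hφ _ _ _ (by rw [map_mul, ← hcd, ← hab]; simp only [mul_assoc])
      _ = φ q * ρ (a * d) := (hφ q _ _ (by rw [map_mul, ← mul_assoc, hcd])).symm
      _ = φ q * φ q' * ρ (b * d) := by
          rw [map_mul, map_mul, ← hφ q' a b hab, mul_assoc, mul_assoc]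
  refine ⟨
    { toFun := φ
      map_one' := by simpa using hφι 1
      map_zero' := by simpa using hφι 0
      map_add' := hadd
      map_mul' := hmul
      commutes' := fun c => by simpa using hφι (algebraMap F B c) }, AlgHom.ext hφι⟩

end IsRightFractionEmbedding

/-! ### Slices of tensors -/

lemma sum_tmul_right_injective {R M N n : Type*} [CommRing R] [AddCommGroup M] [Module R M]
    [Module.Flat R M] [AddCommGroup N] [Module R N] [Fintype n] {w : n → N}
    (hw : LinearIndependent R w) :
    Function.Injective fun x : n → M => ∑ i, x i ⊗ₜ[R] w i := by
  classical
  have key (x : n → M) : ∑ i, x i ⊗ₜ[R] w i =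
      (Finsupp.linearCombination R w).lTensor M
        ((equivFinsuppOfBasisRight Finsupp.basisSingleOne).symm
          (Finsupp.equivFunOnFinite.symm x)) := by
    simp [Finsupp.sum_fintype]
  intro x y hxy
  simp only [key] at hxy
  exact Finsupp.equivFunOnFinite.symm.injective <| LinearEquiv.injective _ <|
    Module.Flat.lTensor_preserves_injective_linearMap _ hw hxy

/-- The slice `m ⊗ n ↦ φ m • n` of a tensor along the linear form `φ` on its left factor. -/
noncomputable def slice {R M : Type*} (N : Type*) [CommSemiring R] [AddCommMonoid M] [Module R M]
    [AddCommMonoid N] [Module R N] (φ : M →ₗ[R] R) : M ⊗[R] N →ₗ[R] N :=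
  (TensorProduct.lid R N).toLinearMap ∘ₗ φ.rTensor N

section Slices

variable {R M N P : Type*} [CommSemiring R] [AddCommMonoid M] [Module R M] [AddCommMonoid N]
  [Module R N] [AddCommMonoid P] [Module R P]

lemma map_slice (φ : M →ₗ[R] R) (f : N →ₗ[R] P) (t : M ⊗[R] N) :
    f (slice N φ t) = slice P φ (f.lTensor M t) := by
  have h : f ∘ₗ slice N φ = slice P φ ∘ₗ f.lTensor M := by ext; simp [slice]
  exact LinearMap.congr_fun h t

lemma slice_assoc (φ : M →ₗ[R] R) (t : (M ⊗[R] N) ⊗[R] P) :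
    slice (N ⊗[R] P) φ (TensorProduct.assoc R M N P t) = (slice N φ).rTensor P t := by
  have h : slice (N ⊗[R] P) φ ∘ₗ (TensorProduct.assoc R M N P).toLinearMap =
      (slice N φ).rTensor P := by
    ext; simp [slice, TensorProduct.smul_tmul']
  exact LinearMap.congr_fun h t

end Slices

lemma exists_submodule_of_slices {F M N : Type*} [Field F] [AddCommGroup M] [Module F M]
    [AddCommGroup N] [Module F N] (t : M ⊗[F] N) :
    ∃ V : Submodule F N, FiniteDimensional F V ∧ t ∈ (V.subtype.lTensor M).range ∧
      ∀ v ∈ V, ∃ φ : M →ₗ[F] F, slice N φ t = v := by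
  classical
  let b := Module.Basis.ofVectorSpace F M
  let c := equivFinsuppOfBasisLeft b t
  let sliceHom : (M →ₗ[F] F) →ₗ[F] N :=
    (TensorProduct.lid F N).toLinearMap ∘ₗ LinearMap.applyₗ t ∘ₗ LinearMap.rTensorHom N
  refine ⟨Submodule.span F (Set.range c), .span_of_finite F c.finite_range, ?_, fun v hv => ?_⟩
  · have ht : t = c.sum fun i n => b i ⊗ₜ n := by simp [c, ← equivFinsuppOfBasisLeft_symm_apply]
    rw [ht]
    exact Submodule.sum_mem _ fun i _ =>
      ⟨b i ⊗ₜ ⟨c i, Submodule.subset_span ⟨i, rfl⟩⟩, LinearMap.lTensor_tmul ..⟩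
  · have hle : Submodule.span F (Set.range c) ≤ sliceHom.range := by
      rw [Submodule.span_le]
      rintro _ ⟨i, rfl⟩
      exact ⟨b.coord i, (equivFinsuppOfBasisLeft_apply b t i).symm⟩
    exact hle hv

lemma range_lTensor_subtype_mono {R M N : Type*} [CommSemiring R] [AddCommMonoid M] [Module R M]
    [AddCommMonoid N] [Module R N] {V W : Submodule R N} (h : V ≤ W) :
    (V.subtype.lTensor M).range ≤ (W.subtype.lTensor M).range := by
  rw [← Submodule.subtype_comp_inclusion V W h, LinearMap.lTensor_comp]
  exact LinearMap.range_comp_le_range _ _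

lemma exists_eq_sum_tmul_of_mem_range_lTensor {R M N n : Type*} [CommSemiring R] [AddCommMonoid M]
    [Module R M] [AddCommMonoid N] [Module R N] [Fintype n] {V : Submodule R N}
    (b : Module.Basis n R V) {x : M ⊗[R] N} (hx : x ∈ (V.subtype.lTensor M).range) :
    ∃ q : n → M, x = ∑ i, q i ⊗ₜ (b i : N) := by
  classical
  obtain ⟨t, rfl⟩ := hx
  obtain ⟨q, rfl⟩ := TensorProduct.eq_repr_basis_right b t
  exact ⟨q, by simp [Finsupp.sum_fintype]⟩

/-! ### Left coideals and multiplicative matrices -/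

section LeftCoideals

variable {R C : Type*} [CommSemiring R] [AddCommMonoid C] [Module R C] [Coalgebra R C]

/-- The submodule `V` of the coalgebra `C` is a left coideal: `Δ V ⊆ C ⊗ V`. -/
def IsLeftCoideal (V : Submodule R C) : Prop :=
  ∀ v ∈ V, comul v ∈ (V.subtype.lTensor C).range

lemma IsLeftCoideal.finset_sup {n : Type*} {s : Finset n} {V : n → Submodule R C}
    (hV : ∀ i ∈ s, IsLeftCoideal (V i)) : IsLeftCoideal (s.sup V) :=
  have hle : s.sup V ≤ ((s.sup V).subtype.lTensor C).range.comap comul :=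
    Finset.sup_le fun i hi v hv => range_lTensor_subtype_mono (Finset.le_sup hi) (hV i hi v hv)
  hle

lemma comul_slice_comul (φ : C →ₗ[R] R) (c : C) :
    comul (slice C φ (comul c)) = (slice C φ).rTensor C (comul.rTensor C (comul (R := R) c)) := by
  rw [map_slice, ← coassoc_apply, slice_assoc]

end LeftCoideals

section LocalFiniteness

variable {F C : Type*} [Field F] [AddCommGroup C] [Module F C] [Coalgebra F C]

lemma exists_finiteDimensional_isLeftCoideal_mem (c : C) :
    ∃ V : Submodule F C, FiniteDimensional F V ∧ IsLeftCoideal V ∧ c ∈ V := by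
  obtain ⟨V, hfin, ⟨t, ht⟩, hslice⟩ := exists_submodule_of_slices (comul (R := F) c)
  refine ⟨V, hfin, fun v hv => ?_, ?_⟩
  · obtain ⟨φ, rfl⟩ := hslice v hv
    refine ⟨(slice C φ).rTensor V (comul.rTensor V t), ?_⟩
    rw [comul_slice_comul, ← ht]
    simp [LinearMap.lTensor, LinearMap.rTensor, TensorProduct.map_map]
  · have hc : slice C counit (comul (R := F) c) = c := by simp [slice]
    rw [← hc, ← ht, ← map_slice]
    exact Submodule.coe_mem _

lemma exists_isLeftCoideal_mem_range_lTensor {M : Type*} [AddCommGroup M] [Module F M]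
    (x : M ⊗[F] C) : ∃ V : Submodule F C, FiniteDimensional F V ∧ IsLeftCoideal V ∧
      x ∈ (V.subtype.lTensor M).range := by
  classical
  choose V hfin hV hmem using exists_finiteDimensional_isLeftCoideal_mem (F := F) (C := C)
  obtain ⟨s, rfl⟩ := TensorProduct.exists_finset x
  refine ⟨s.sup fun p => V p.2, Submodule.finiteDimensional_finset_sup _ _,
    .finset_sup fun p _ => hV p.2, Submodule.sum_mem _ fun p hp => ?_⟩
  exact range_lTensor_subtype_mono (Finset.le_sup (f := fun p : M × C => V p.2) hp)
    ⟨p.1 ⊗ₜ ⟨p.2, hmem p.2⟩, LinearMap.lTensor_tmul ..⟩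

end LocalFiniteness

/-- `a` is a multiplicative matrix over the coalgebra `C`, i.e. `Δ aᵢⱼ = ∑ₖ aᵢₖ ⊗ aₖⱼ` and
`ε aᵢⱼ = δᵢⱼ`: the matrix of coefficients of a finite-dimensional comodule. -/
structure IsMultiplicativeMatrix (R : Type*) {C n : Type*} [CommSemiring R] [AddCommMonoid C]
    [Module R C] [Coalgebra R C] [Fintype n] [DecidableEq n] (a : Matrix n n C) : Prop where
  comul_apply (i j : n) : comul (R := R) (a i j) = ∑ k, a i k ⊗ₜ a k j
  counit_apply (i j : n) : counit (R := R) (a i j) = (1 : Matrix n n R) i j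

lemma isMultiplicativeMatrix_of_linearIndependent {R C n : Type*} [CommRing R] [AddCommGroup C]
    [Module R C] [Module.Flat R C] [Coalgebra R C] [Fintype n] [DecidableEq n] {w : n → C}
    (hw : LinearIndependent R w) {a : Matrix n n C}
    (ha : ∀ i, comul (R := R) (w i) = ∑ j, a i j ⊗ₜ w j) : IsMultiplicativeMatrix R a where
  comul_apply i := by
    refine congr_fun (sum_tmul_right_injective hw ?_)
    calc ∑ j, comul (a i j) ⊗ₜ[R] w j = comul.rTensor C (comul (w i)) := by simp [ha]
      _ = (TensorProduct.assoc R C C C).symm (comul.lTensor C (comul (w i))) := by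
        rw [coassoc_symm_apply]
      _ = ∑ k, ∑ j, (a i k ⊗ₜ a k j) ⊗ₜ w j := by simp [ha, TensorProduct.tmul_sum]
      _ = ∑ j, (∑ k, a i k ⊗ₜ a k j) ⊗ₜ w j := by
        simp only [TensorProduct.sum_tmul]; exact Finset.sum_comm
  counit_apply i := by
    refine congr_fun (sum_tmul_right_injective hw ?_)
    calc ∑ j, counit (a i j) ⊗ₜ[R] w j = counit.rTensor C (comul (w i)) := by simp [ha]
      _ = ∑ j, (1 : Matrix n n R) i j ⊗ₜ w j := by
        simp [Matrix.one_apply, ite_tmul]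

lemma exists_isMultiplicativeMatrix {F C M : Type*} [Field F] [AddCommGroup C] [Module F C]
    [Coalgebra F C] [AddCommGroup M] [Module F M] (x : M ⊗[F] C) :
    ∃ (n : ℕ) (a : Matrix (Fin n) (Fin n) C) (w : Fin n → C) (q : Fin n → M),
      IsMultiplicativeMatrix F a ∧ LinearIndependent F w ∧
      (∀ i, comul (R := F) (w i) = ∑ j, a i j ⊗ₜ w j) ∧ x = ∑ i, q i ⊗ₜ w i := by
  obtain ⟨V, hfin, hV, hx⟩ := exists_isLeftCoideal_mem_range_lTensor x
  let b := Module.finBasis F V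
  have hw : LinearIndependent F fun i => (b i : C) :=
    b.linearIndependent.map' V.subtype V.ker_subtype
  choose a ha using fun i => exists_eq_sum_tmul_of_mem_range_lTensor b (hV (b i) (b i).2)
  obtain ⟨q, rfl⟩ := exists_eq_sum_tmul_of_mem_range_lTensor b hx
  exact ⟨_, .of a, _, q, isMultiplicativeMatrix_of_linearIndependent hw ha, hw, ha, rfl⟩

/-! ### Units of convolution algebras -/

section ConvolutionUnits

/-- An `R`-linear map `f : C → P` into an `A`-module extends uniquely to the `A`-linear map
`x ⊗ c ↦ x • f c` on `A ⊗ C`. The algebra `A` need not be commutative. -/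
noncomputable def tensorLift {R : Type*} (A : Type*) {C P : Type*} [CommSemiring R] [Semiring A]
    [Algebra R A] [AddCommMonoid C] [Module R C] [AddCommMonoid P] [Module R P] [Module A P]
    [IsScalarTower R A P] : (C →ₗ[R] P) ≃ (A ⊗[R] C →ₗ[A] P) where
  toFun f := AlgebraTensorModule.lift (LinearMap.toSpanSingleton A (C →ₗ[R] P) f)
  invFun g := g.restrictScalars R ∘ₗ TensorProduct.mk R A C 1
  left_inv f := by ext; simp
  right_inv g := by ext; simp

variable {R A C : Type*} [CommSemiring R] [Semiring A] [Algebra R A] [AddCommMonoid C] [Module R C]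

lemma tensorLift_tmul {P : Type*} [AddCommMonoid P] [Module R P] [Module A P]
    [IsScalarTower R A P] (f : C →ₗ[R] P) (x : A) (c : C) :
    tensorLift A f (x ⊗ₜ c) = x • f c :=
  rfl

variable [Coalgebra R C]

/-- The `A`-linear endomorphism `x ⊗ c ↦ x r(c₁) ⊗ c₂` of `A ⊗ C`. Under `tensorLift`, convolution
by `r` on the left becomes precomposition with it. -/
noncomputable def convTwist (r : WithConv (C →ₗ[R] A)) : A ⊗[R] C →ₗ[A] A ⊗[R] C :=
  tensorLift A (r.ofConv.rTensor C ∘ₗ comul)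

lemma tensorLift_convMul (r f : WithConv (C →ₗ[R] A)) :
    tensorLift A (r * f).ofConv = tensorLift A f.ofConv ∘ₗ convTwist r := by
  have h (t : C ⊗[R] C) : tensorLift A f.ofConv (r.ofConv.rTensor C t) =
      LinearMap.mul' R A (TensorProduct.map r.ofConv f.ofConv t) := by
    induction t with
    | zero => simp
    | add x y hx hy => simp only [map_add, hx, hy]
    | tmul x y => simp [tensorLift_tmul]
  ext c
  simp [LinearMap.convMul_apply, tensorLift_tmul, convTwist, ← h]

lemma isUnit_of_convTwist_bijective {r : WithConv (C →ₗ[R] A)}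
    (hr : Function.Bijective (convTwist r)) : IsUnit r := by
  let e := LinearEquiv.ofBijective (convTwist r) hr
  refine IsUnit.isUnit_iff_mulLeft_bijective.2 ⟨fun f g hfg => ?_, fun g => ?_⟩
  · refine WithConv.ofConv_injective <| (tensorLift A).injective <|
      (LinearMap.cancel_right hr.surjective).1 ?_
    simpa only [tensorLift_convMul] using congr_arg (fun f => tensorLift A f.ofConv) hfg
  · refine ⟨toConv ((tensorLift A).symm (tensorLift A g.ofConv ∘ₗ e.symm.toLinearMap)), ?_⟩
    refine WithConv.ofConv_injective <| (tensorLift A).injective ?_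
    ext c
    simp [tensorLift_convMul, e]

lemma convTwist_sum_tmul {n : Type*} [Fintype n] {a : Matrix n n C} {w : n → C}
    (hw : ∀ i, comul (R := R) (w i) = ∑ j, a i j ⊗ₜ w j) (r : WithConv (C →ₗ[R] A)) (q : n → A) :
    convTwist r (∑ i, q i ⊗ₜ w i) = ∑ j, (q ᵥ* a.map r.ofConv) j ⊗ₜ w j := by
  calc convTwist r (∑ i, q i ⊗ₜ w i) = ∑ i, ∑ j, (q i * r.ofConv (a i j)) ⊗ₜ w j := by
        simp [convTwist, tensorLift_tmul, hw, Finset.smul_sum, TensorProduct.smul_tmul']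
    _ = ∑ j, (q ᵥ* a.map r.ofConv) j ⊗ₜ w j := by
        rw [Finset.sum_comm]
        simp [Matrix.vecMul, dotProduct, TensorProduct.sum_tmul]

end ConvolutionUnits

lemma isUnit_of_isUnit_map_of_isMultiplicativeMatrix {F A C : Type*} [Field F] [Ring A]
    [Algebra F A] [AddCommGroup C] [Module F C] [Coalgebra F C] {r : WithConv (C →ₗ[F] A)}
    (hr : ∀ (n : ℕ) (a : Matrix (Fin n) (Fin n) C), IsMultiplicativeMatrix F a →
      IsUnit (a.map r.ofConv)) : IsUnit r := by
  refine isUnit_of_convTwist_bijective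
    ⟨(injective_iff_map_eq_zero _).2 fun x hx => ?_, fun x => ?_⟩
  · obtain ⟨n, a, w, q, ha, hw, hcomul, rfl⟩ := exists_isMultiplicativeMatrix x
    rw [convTwist_sum_tmul hcomul] at hx
    have hq : q ᵥ* a.map r.ofConv = 0 :=
      sum_tmul_right_injective hw (hx.trans (by simp))
    have hq0 : q = 0 := Matrix.vecMul_injective_of_isUnit (hr n a ha) (hq.trans (by simp))
    simp [hq0]
  · obtain ⟨n, a, w, q, ha, -, hcomul, rfl⟩ := exists_isMultiplicativeMatrix x
    obtain ⟨N, hN⟩ := (hr n a ha).exists_left_inv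
    refine ⟨∑ i, (q ᵥ* N) i ⊗ₜ w i, ?_⟩
    rw [convTwist_sum_tmul hcomul, Matrix.vecMul_vecMul, hN, Matrix.vecMul_one]

/-! ### Multiplicative matrices over a Hopf algebra -/

namespace IsMultiplicativeMatrix

variable {R H n : Type*} [CommSemiring R] [Semiring H] [HopfAlgebra R H] [Fintype n]
  [DecidableEq n] {a : Matrix n n H}

lemma map_antipode_mul (ha : IsMultiplicativeMatrix R a) : a.map (antipode R) * a = 1 := by
  ext i j
  have h := mul_antipode_rTensor_comul_apply (R := R) (a i j)
  simpa [ha.comul_apply, ha.counit_apply, Matrix.mul_apply, Matrix.one_apply, apply_ite] using h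

lemma mul_map_antipode (ha : IsMultiplicativeMatrix R a) : a * a.map (antipode R) = 1 := by
  ext i j
  have h := mul_antipode_lTensor_comul_apply (R := R) (a i j)
  simpa [ha.comul_apply, ha.counit_apply, Matrix.mul_apply, Matrix.one_apply, apply_ite] using h

end IsMultiplicativeMatrix

namespace ModAlgAction

section MatrixAction

variable {k H A : Type} [CommRing k] [Ring H] [Module k H] {Δ : H →ₗ[k] H ⊗[k] H}
  {ε : H →ₗ[k] k} [Ring A] [Algebra k A] (ha : ModAlgAction k H Δ ε A)
  {l m n : Type*} [Fintype n]

/-- The action of matrices over `H` on vectors over the `H`-module algebra `A`. -/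
def actVec (a : Matrix m n H) (w : n → A) : m → A :=
  fun i => ∑ j, ha.act (a i j) (w j)

@[simp]
lemma actVec_zero (a : Matrix m n H) : ha.actVec a 0 = 0 := by
  ext; simp [actVec]

lemma actVec_one [DecidableEq n] (w : n → A) : ha.actVec 1 w = w := by
  ext i
  have h (j : n) : ha.act ((1 : Matrix n n H) i j) (w j) = if i = j then w j else 0 := by
    rw [Matrix.one_apply]
    split_ifs <;> simp [ha.one_act]
  simp [actVec, h]

lemma actVec_mul [Fintype m] (a : Matrix l m H) (b : Matrix m n H) (w : n → A) :
    ha.actVec (a * b) w = ha.actVec a (ha.actVec b w) := by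
  ext i
  simp only [actVec, Matrix.mul_apply, map_sum, LinearMap.sum_apply, ha.mul_act]
  exact Finset.sum_comm

end MatrixAction

variable {k H A : Type} [CommRing k] [Ring H] [Ring A] [Algebra k A] {n : Type*} [Fintype n]
  [DecidableEq n] {a : Matrix n n H}

lemma map_act_mulVec_actVec [Bialgebra k H] (ha : HopfAction k H A)
    (hmat : IsMultiplicativeMatrix k a) (z : A) (w : n → A) :
    a.map (ha.act.flip z) *ᵥ ha.actVec a w = ha.actVec a fun i => z * w i := by
  ext i
  calc ∑ j, ha.act (a i j) z * ∑ l, ha.act (a j l) (w l)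
      = ∑ l, ∑ j, ha.act (a i j) z * ha.act (a j l) (w l) := by
        simp only [Finset.mul_sum]; exact Finset.sum_comm
    _ = ∑ l, ha.act (a i l) (z * w l) := by simp [ha.act_mul, hmat.comul_apply]

lemma map_act_mulVec_injective [HopfAlgebra k H] [NoZeroDivisors A] (ha : HopfAction k H A)
    (hmat : IsMultiplicativeMatrix k a) {z : A} (hz : z ≠ 0) :
    Function.Injective (a.map (ha.act.flip z)).mulVec := by
  suffices h : ∀ y, a.map (ha.act.flip z) *ᵥ y = 0 → y = 0 from fun x y hxy =>
    sub_eq_zero.1 <| h _ <| by rw [Matrix.mulVec_sub, sub_eq_zero.2 hxy]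
  intro y hy
  let w := ha.actVec (a.map (antipode k)) y
  have hy_eq : ha.actVec a w = y := by
    rw [← ha.actVec_mul, hmat.mul_map_antipode, ha.actVec_one]
  have hzw : (fun i => z * w i) = 0 := by
    rw [← ha.actVec_one fun i => z * w i, ← hmat.map_antipode_mul, ha.actVec_mul,
      ← map_act_mulVec_actVec ha hmat, hy_eq, hy, actVec_zero]
  have hw : w = 0 := funext fun i => (mul_eq_zero.1 (congr_fun hzw i)).resolve_left hz
  rw [← hy_eq, hw, actVec_zero]

end ModAlgAction

/-! ### Functoriality of convolution algebras -/

section ConvolutionFunctoriality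

variable {R A B C D : Type*} [CommSemiring R] [Semiring A] [Algebra R A] [Semiring B] [Algebra R B]
  [AddCommMonoid C] [Module R C] [Coalgebra R C] [AddCommMonoid D] [Module R D] [Coalgebra R D]

variable (C) in
/-- Postcomposition with an algebra homomorphism, as a homomorphism of convolution algebras. -/
noncomputable def convPostcomp (g : A →ₐ[R] B) :
    WithConv (C →ₗ[R] A) →ₐ[R] WithConv (C →ₗ[R] B) :=
  AlgHom.ofLinearMap
    { toFun := fun f => toConv (g.toLinearMap ∘ₗ f.ofConv)
      map_add' := fun f f' => by ext; simp
      map_smul' := fun r f => by ext; simp }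
    (by ext; simp)
    (fun f f' => WithConv.ofConv_injective (LinearMap.algHom_comp_convMul_distrib g f f'))

variable (A) in
/-- Precomposition with a coalgebra homomorphism, as a homomorphism of convolution algebras. -/
noncomputable def convPrecomp (g : D →ₗc[R] C) :
    WithConv (C →ₗ[R] A) →ₐ[R] WithConv (D →ₗ[R] A) :=
  AlgHom.ofLinearMap
    { toFun := fun f => toConv (f.ofConv ∘ₗ g.toLinearMap)
      map_add' := fun f f' => by ext; simp
      map_smul' := fun r f => by ext; simp }
    (by ext; simp)
    (fun f f' => WithConv.ofConv_injective (LinearMap.convMul_comp_coalgHom_distrib f f' g))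

variable (A) in
/-- Evaluation at a group-like element, as a homomorphism from the convolution algebra. -/
noncomputable def convEval {c : C} (hc : IsGroupLikeElem R c) :
    WithConv (C →ₗ[R] A) →ₐ[R] A :=
  AlgHom.ofLinearMap
    (LinearMap.applyₗ c ∘ₗ (WithConv.linearEquiv R (C →ₗ[R] A)).toLinearMap)
    (by simp [hc.counit_eq_one])
    (fun f f' => by simp [LinearMap.convMul_apply, hc.comul_eq_tmul_self])

/-- The homomorphism `Hom(C, Hom(D, A)) → Hom(D ⊗ C, A)` of convolution algebras sending `f` to
`d ⊗ c ↦ f c d`. -/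
noncomputable def convUncurry :
    WithConv (C →ₗ[R] WithConv (D →ₗ[R] A)) →ₐ[R] WithConv (D ⊗[R] C →ₗ[R] A) :=
  AlgHom.ofLinearMap
    { toFun := fun f => toConv <| TensorProduct.lift
        ((WithConv.linearEquiv R (D →ₗ[R] A)).toLinearMap ∘ₗ f.ofConv).flip
      map_add' := fun f f' => by ext; simp
      map_smul' := fun r f => by ext; simp }
    (by ext; simp [Algebra.smul_def])
    (fun f f' => by
      ext d c
      simp only [LinearMap.coe_mk, AddHom.coe_mk, LinearMap.convMul_apply, TensorProduct.comul_tmul,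
        AlgebraTensorModule.curry_apply, LinearMap.restrictScalars_self, TensorProduct.curry_apply,
        TensorProduct.lift.tmul, LinearMap.flip_apply, LinearMap.comp_apply]
      generalize comul (R := R) c = t
      induction t with
      | zero => simp
      | add x y hx hy => simp only [map_add, LinearMap.add_apply, TensorProduct.tmul_add, hx, hy]
      | tmul c₁ c₂ =>
        simp only [map_tmul, LinearMap.mul'_apply, LinearEquiv.coe_coe, linearEquiv_apply,
          LinearMap.convMul_apply]
        generalize comul (R := R) d = s
        induction s with
        | zero => simp
        | add x y hx hy => simp only [map_add, TensorProduct.add_tmul, hx, hy]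
        | tmul d₁ d₂ => simp)

end ConvolutionFunctoriality

/-! ### Actions and their orbit homomorphisms -/

lemma lift_mul_comp_compl₂ {R A C D : Type*} [CommSemiring R] [Semiring A] [Algebra R A]
    [AddCommMonoid C] [Module R C] [AddCommMonoid D] [Module R D] (f : C →ₗ[R] A) (g : D →ₗ[R] A) :
    TensorProduct.lift (((LinearMap.mul R A).comp f).compl₂ g) =
      LinearMap.mul' R A ∘ₗ TensorProduct.map f g := by
  ext
  simp

namespace HopfAction

variable {k H A : Type} [CommRing k] [Ring H] [Bialgebra k H] [Ring A] [Algebra k A]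

/-- The homomorphism `x ↦ (h ↦ h • x)` from an `H`-module algebra `A` to the convolution algebra
`Hom(H, A)`; its multiplicativity expresses that `H` measures `A`. -/
noncomputable def orbitHom (ha : HopfAction k H A) :
    A →ₐ[k] WithConv (H →ₗ[k] A) :=
  AlgHom.ofLinearMap ((WithConv.linearEquiv k (H →ₗ[k] A)).symm.toLinearMap ∘ₗ ha.act.flip)
    (by ext h; simp [ha.act_one])
    (fun x y => by
      ext h
      simp [ha.act_mul, lift_mul_comp_compl₂, LinearMap.convMul_apply])

/-- The action whose orbit homomorphism is `φ`. -/
noncomputable def ofOrbitHom (φ : A →ₐ[k] WithConv (H →ₗ[k] A))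
    (one_act : ∀ x, (φ x).ofConv 1 = x)
    (mul_act : ∀ g h x, (φ x).ofConv (g * h) = (φ ((φ x).ofConv h)).ofConv g) :
    HopfAction k H A where
  act := ((WithConv.linearEquiv k (H →ₗ[k] A)).toLinearMap ∘ₗ φ.toLinearMap).flip
  one_act := one_act
  mul_act := mul_act
  act_one h := by simp
  act_mul h x y := by
    rw [lift_mul_comp_compl₂]
    simp [LinearMap.convMul_apply]

end HopfAction

lemma InnerFaithfulWith.of_injective {k H A B : Type} [CommRing k] [Ring H] [Module k H]
    [Ring A] [Algebra k A] [Ring B] [Algebra k B] {Δ : H →ₗ[k] H ⊗[k] H} {ε : H →ₗ[k] k}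
    {S : H →ₗ[k] H} {actA : H →ₗ[k] A →ₗ[k] A} {actB : H →ₗ[k] B →ₗ[k] B}
    (hA : InnerFaithfulWith k H Δ ε S A actA) {f : A →ₗ[k] B} (hf : Function.Injective f)
    (hequiv : ∀ h x, actB h (f x) = f (actA h x)) : InnerFaithfulWith k H Δ ε S B actB :=
  fun I hI hann => hA I hI fun h hh x => hf <| by rw [← hequiv, hann h hh, map_zero]

namespace IsRightFractionEmbedding

section

variable {F H B Q : Type} [CommRing F] [Ring H] [Bialgebra F H] [Ring B] [Algebra F B]
  [DivisionRing Q] [Algebra F Q] {ι : B →ₐ[F] Q}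

lemma exists_extends_of_isUnit_orbit (hι : IsRightFractionEmbedding ι) (ha : HopfAction F H B)
    (hunit : ∀ z, z ≠ 0 → IsUnit (convPostcomp H ι (ha.orbitHom z))) :
    ∃ haQ : HopfAction F H Q, ∀ h b, haQ.act h (ι b) = ι (ha.act h b) := by
  obtain ⟨φ, hφ⟩ := hι.exists_algHom_comp_eq (ρ := (convPostcomp H ι).comp ha.orbitHom) hunit
  have hφι (b : B) (h : H) : (φ (ι b)).ofConv h = ι (ha.act h b) :=
    congr(($hφ b).ofConv h)
  have one_act : (convEval Q IsGroupLikeElem.one).comp φ = AlgHom.id F Q :=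
    hι.algHom_ext <| AlgHom.ext fun b => (hφι b 1).trans congr(ι $(ha.one_act b))
  have mul_act : (convPrecomp Q (Bialgebra.mulCoalgHom F H)).comp φ =
      (convUncurry.comp (convPostcomp H φ)).comp φ := by
    refine hι.algHom_ext <| AlgHom.ext fun b => ?_
    ext g h
    change (φ (ι b)).ofConv (g * h) = (φ ((φ (ι b)).ofConv h)).ofConv g
    rw [hφι, hφι, hφι, ha.mul_act]
  exact ⟨.ofOrbitHom φ (DFunLike.congr_fun one_act)
    fun g h q => congr(($mul_act q).ofConv (g ⊗ₜ h)), fun h b => hφι b h⟩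

end

variable {F H B Q : Type} [Field F] [Ring H] [HopfAlgebra F H] [Ring B] [Algebra F B]
  [DivisionRing Q] [Algebra F Q] {ι : B →ₐ[F] Q}

lemma isUnit_orbit (hι : IsRightFractionEmbedding ι) (ha : HopfAction F H B) {z : B}
    (hz : z ≠ 0) : IsUnit (convPostcomp H ι (ha.orbitHom z)) := by
  have := hι.noZeroDivisors
  refine isUnit_of_isUnit_map_of_isMultiplicativeMatrix fun n a hmat => ?_
  exact isUnit_of_mulVec_injective
    (hι.mulVec_injective_map (ModAlgAction.map_act_mulVec_injective ha hmat hz))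

end IsRightFractionEmbedding

theorem inner_faithful_action_extends_to_quotient_division_algebra_general
    (F : Type) [Field F]
    (H : Type) [Ring H] [HopfAlgebra F H]
    (B : Type) [Ring B] [Algebra F B]
    (ha : HopfAction F H B) (hif : ha.InnerFaithful)
    (Q : Type) [DivisionRing Q] [Algebra F Q]
    (ι : B →ₐ[F] Q) (hinj : Function.Injective ι)
    (hfrac : ∀ q : Q, ∃ a b : B, b ≠ 0 ∧ q = ι a * (ι b)⁻¹) :
    ∃ haQ : HopfAction F H Q,
      (∀ (h : H) (b : B), haQ.act h (ι b) = ι (ha.act h b)) ∧ haQ.InnerFaithful := by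
  have hι : IsRightFractionEmbedding ι := ⟨hinj, hfrac⟩
  obtain ⟨haQ, hext⟩ := hι.exists_extends_of_isUnit_orbit ha fun z => hι.isUnit_orbit ha
  exact ⟨haQ, hext, hif.of_injective (f := ι.toLinearMap) hinj hext⟩

/-- Let `H` be a Hopf algebra over an algebraically closed field `F` and `B` a PI domain
over `F` with an inner faithful `H`-action.  Then the action extends to an inner faithful
action of `H` on the quotient division algebra `Q_B` of `B`. -/
theorem inner_faithful_action_extends_to_quotient_division_algebra
    (F : Type) [Field F] [IsAlgClosed F]
    (H : Type) [Ring H] [HopfAlgebra F H]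
    (B : Type) [Ring B] [Algebra F B] [IsDomain B] (hPI : IsPIAlgebra F B)
    (ha : HopfAction F H B) (hif : ha.InnerFaithful)
    (Q : Type) [DivisionRing Q] [Algebra F Q]
    (ι : B →ₐ[F] Q) (hinj : Function.Injective ι)
    (hfrac : ∀ q : Q, ∃ a b : B, b ≠ 0 ∧ q = ι a * (ι b)⁻¹) :
    ∃ haQ : HopfAction F H Q,
      (∀ (h : H) (b : B), haQ.act h (ι b) = ι (ha.act h b)) ∧ haQ.InnerFaithful :=
  inner_faithful_action_extends_to_quotient_division_algebra_general F H B ha hif Q ι hinj hfrac
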